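/- Let 𝒮₀ be a nonempty decreasing subset of 𝒮 with 𝒮₀≠𝒮, and write a(δ') := inf_{μ∈𝒞(𝒮₀)} Λ_{δ',𝒮₀}(μ) for δ'>0. Then a is strictly decreasing on (0,∞). Moreover: if there exist E₀∈𝒮₀ and a nonempty set E'⊆E₀ with E'∩∂E₀=∅ such that E' = supp(μ|₁) for some μ∈𝒫(V_S) satisfying μq=μ for some q∈𝒯_S, then lim_{δ'→0+} a(δ') = inf{ Λ₁(μ) : μ∈𝒫(V_S) and supp(μ|₁)⊆E₀∖∂E₀ for some E₀∈𝒮₀ } < ∞; otherwise lim_{δ'→0+} a(δ') = ∞. -/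

import Mathlib

open scoped BigOperators Classical ENNReal
open Filter Topology

noncomputable section
namespace ORRW

/-- Probability measures on a finite type `A`, topologized as a subset of `ℝ^A`. -/
abbrev ProbMeas (A : Type) [Fintype A] : Type :=
  {p : A → ℝ // (∀ a, 0 ≤ p a) ∧ ∑ a, p a = 1}

/-- Relative entropy `R(γ‖ρ)` between two finitely supported "rows", valued in `EReal`,
with `+∞` when absolute continuity fails. -/
def relEnt {A : Type} [Fintype A] (γ ρ : A → ℝ) : EReal :=
  if ∀ a, ρ a = 0 → γ a = 0 then ((∑ a, γ a * Real.log (γ a / ρ a) : ℝ) : EReal)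
  else (⊤ : EReal)

/-- `∫ R(q‖p) dν = Σ_a ν(a) · R(q(a,·)‖p(a,·))`. -/
def relEntInt {A : Type} [Fintype A] (ν : A → ℝ) (q p : A → A → ℝ) : EReal :=
  ∑ a, (ν a : EReal) * relEnt (q a) (p a)

/-- `ν` is an invariant measure of the kernel `q`. -/
def Invariant {A : Type} [Fintype A] (ν : A → ℝ) (q : A → A → ℝ) : Prop :=
  ∀ y, ∑ x, ν x * q x y = ν y

/-- Extended-real logarithm: `⊥` at nonpositive arguments. -/
def elog (x : ℝ) : EReal := if x ≤ 0 then (⊥ : EReal) else ((Real.log x : ℝ) : EReal)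

/-- Empirical measure of a finite trajectory `f : Fin (n+1) → A`. -/
def empMeas {A : Type} [Fintype A] [DecidableEq A] (n : ℕ) (f : Fin (n + 1) → A) :
    ProbMeas A :=
  ⟨fun a => ((Finset.univ.filter (fun i => f i = a)).card : ℝ) / (n + 1),
    fun a => by positivity, by
      have key : ∑ a : A, ((Finset.univ.filter (fun i => f i = a)).card) = n + 1 := by
        have h := Finset.card_eq_sum_card_fiberwise
          (s := (Finset.univ : Finset (Fin (n + 1)))) (t := (Finset.univ : Finset A))
          (f := f) (fun i _ => Finset.mem_univ (f i))
        simpa using h.symm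
      have key' : ∑ a : A, (((Finset.univ.filter (fun i => f i = a)).card : ℝ)) = (n : ℝ) + 1 := by
        have h2 := congrArg (fun m : ℕ => (m : ℝ)) key
        push_cast at h2
        simpa using h2
      rw [← Finset.sum_div, key', div_self (by positivity)]⟩

section Graph

variable {V : Type} [Fintype V] [DecidableEq V]

/-- Weight of an edge given the set `F` of already traversed edges. -/
def gw (δ : ℝ) (F : Finset (Sym2 V)) (e : Sym2 V) : ℝ := if e ∈ F then δ else 1

/-- The transition kernel `p̂_F` on `V`. -/
def phat (G : SimpleGraph V) [DecidableRel G.Adj] (δ : ℝ) (F : Finset (Sym2 V))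
    (x y : V) : ℝ :=
  if G.Adj x y then gw δ F s(x, y) / ∑ z ∈ G.neighborFinset x, gw δ F s(x, z) else 0

/-- Two edges are adjacent iff they share a vertex. -/
def edgeAdj (e e' : Sym2 V) : Prop := ∃ v, v ∈ e ∧ v ∈ e'

/-- `x` is a vertex of the edge set `F`. -/
def memVerts (F : Finset (Sym2 V)) (x : V) : Prop := ∃ e ∈ F, x ∈ e

/-- `𝒯_G`: stochastic matrices on `V` adapted to `G`. -/
def TG (G : SimpleGraph V) : Set (V → V → ℝ) :=
  {q | (∀ x y, 0 ≤ q x y) ∧ (∀ x, ∑ y, q x y = 1) ∧ ∀ x y, q x y ≠ 0 → G.Adj x y}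

/-- `𝒯(F)`: stochastic kernels from the vertex set of `F` to `V`, supported on `F`. -/
def TE (F : Finset (Sym2 V)) : Set (V → V → ℝ) :=
  {q | (∀ x y, 0 ≤ q x y) ∧ (∀ x, memVerts F x → ∑ y, q x y = 1) ∧
    ∀ x y, q x y ≠ 0 → s(x, y) ∈ F}

/-- `ℰ`: admissible increasing sequences of traversed edge sets. -/
def seqE (G : SimpleGraph V) [DecidableRel G.Adj] (v₁ : V) :
    Set (Fin G.edgeFinset.card → Finset (Sym2 V)) :=
  {Es | (∀ k, Es k ⊆ G.edgeFinset) ∧ (∀ k, (Es k).card = (k : ℕ) + 1) ∧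
    (∀ k l : Fin G.edgeFinset.card, (k : ℕ) + 1 = (l : ℕ) → Es k ⊂ Es l) ∧
    (∀ k : Fin G.edgeFinset.card, (k : ℕ) = 0 → ∃ e ∈ Es k, v₁ ∈ e) ∧
    (∀ k l : Fin G.edgeFinset.card, (k : ℕ) + 1 = (l : ℕ) →
      ∀ e ∈ Es l \ Es k, ∃ e' ∈ Es k, edgeAdj e e')}

/-- The rate function `I_δ`. -/
def Ifun (G : SimpleGraph V) [DecidableRel G.Adj] (v₁ : V) (δ : ℝ) (ν : ProbMeas V) : EReal :=
  sInf { c : EReal |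
    ∃ (νs : Fin G.edgeFinset.card → ProbMeas V) (r : Fin G.edgeFinset.card → ℝ)
      (Es : Fin G.edgeFinset.card → Finset (Sym2 V))
      (qs : Fin G.edgeFinset.card → V → V → ℝ),
      Es ∈ seqE G v₁ ∧ (∀ k, 0 ≤ r k) ∧ (∑ k, r k = 1) ∧
      (∀ k x, (νs k).1 x ≠ 0 → memVerts (Es k) x) ∧
      (∀ x, ∑ k, r k * (νs k).1 x = ν.1 x) ∧
      (∀ k, qs k ∈ TE (Es k)) ∧ (∀ k, Invariant (νs k).1 (qs k)) ∧
      c = ∑ k, ((r k : ℝ) : EReal) * relEntInt (νs k).1 (qs k) (phat G δ (Es k)) }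

/-- Edges traversed along a path, given as a list of consecutively visited vertices. -/
def pathEdges : List V → Finset (Sym2 V)
  | [] => ∅
  | [_] => ∅
  | x :: y :: t => insert s(x, y) (pathEdges (y :: t))

/-- Product of one-step ORRW transition probabilities along a trajectory,
the trajectory being listed in reverse chronological order. -/
def stepsProb (G : SimpleGraph V) [DecidableRel G.Adj] (δ : ℝ) : List V → ℝ
  | [] => 1
  | [_] => 1
  | y :: x :: t => phat G δ (pathEdges (x :: t).reverse) x y * stepsProb G δ (x :: t)

/-- The law of `(X_0, …, X_n)` for the `δ`-ORRW started at `v₁`. -/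
def trajProb (G : SimpleGraph V) [DecidableRel G.Adj] (δ : ℝ) (v₁ : V) (n : ℕ)
    (f : Fin (n + 1) → V) : ℝ :=
  if f 0 = v₁ then stepsProb G δ (List.ofFn f).reverse else 0

/-- `P_{v₁}(L_{n+1} ∈ C)`: the probability that the empirical measure of the first
`n+1` positions of the `δ`-ORRW lies in `C`. -/
def probEmp (G : SimpleGraph V) [DecidableRel G.Adj] (δ : ℝ) (v₁ : V) (n : ℕ)
    (C : Set (ProbMeas V)) : ℝ :=
  ∑ f : Fin (n + 1) → V, if empMeas n f ∈ C then trajProb G δ v₁ n f else 0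

/-- The family `𝒮` of edge sets of connected subgraphs having an edge at `v₁`. -/
def scrS (G : SimpleGraph V) [DecidableRel G.Adj] (v₁ : V) : Set (Finset (Sym2 V)) :=
  {F | F ⊆ G.edgeFinset ∧ (∃ e ∈ F, v₁ ∈ e) ∧
    ∀ x y : V, memVerts F x → memVerts F y →
      (SimpleGraph.fromEdgeSet (↑F : Set (Sym2 V))).Reachable x y}

/-- `𝒮₀` is a decreasing subset of `𝒮`. -/
def DecreasingIn (G : SimpleGraph V) [DecidableRel G.Adj] (v₁ : V)
    (S0 : Set (Finset (Sym2 V))) : Prop :=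
  ∀ F₁ F₂, F₁ ∈ scrS G v₁ → F₂ ∈ scrS G v₁ → F₁ ⊆ F₂ → F₂ ∈ S0 → F₁ ∈ S0

/-- `P_{v₁}(T_{𝒮₀} > n)`. -/
def probTgt (G : SimpleGraph V) [DecidableRel G.Adj] (δ : ℝ) (v₁ : V)
    (S0 : Set (Finset (Sym2 V))) (n : ℕ) : ℝ :=
  ∑ f : Fin (n + 1) → V,
    if ∀ k, 1 ≤ k → k ≤ n → pathEdges ((List.ofFn f).take (k + 1)) ∈ S0 then
      trajProb G δ v₁ n f
    else 0

/-- `P_{v₁}(C_E > n)` for the edge cover time `C_E`. -/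
def probCgt (G : SimpleGraph V) [DecidableRel G.Adj] (δ : ℝ) (v₁ : V) (n : ℕ) : ℝ :=
  ∑ f : Fin (n + 1) → V,
    if ¬ G.edgeFinset ⊆ pathEdges (List.ofFn f) then trajProb G δ v₁ n f else 0

/-- `E_{v₁}[exp (α T_{𝒮₀})]`, valued in `ℝ≥0∞`; the stopping time takes values in
`{1, 2, …} ∪ {∞}`. -/
def expT (G : SimpleGraph V) [DecidableRel G.Adj] (δ : ℝ) (v₁ : V)
    (S0 : Set (Finset (Sym2 V))) (α : ℝ) : ℝ≥0∞ :=
  (∑' n : ℕ, ENNReal.ofReal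
      (Real.exp (α * (n + 1)) * (probTgt G δ v₁ S0 n - probTgt G δ v₁ S0 (n + 1)))) +
    (if 0 < α then (⊤ : ℝ≥0∞) else if α = 0 then 1 else 0) *
      ENNReal.ofReal (⨅ n : ℕ, probTgt G δ v₁ S0 n)

/-- `E_{v₁}[exp (α C_E)]`, valued in `ℝ≥0∞`. -/
def expC (G : SimpleGraph V) [DecidableRel G.Adj] (δ : ℝ) (v₁ : V) (α : ℝ) : ℝ≥0∞ :=
  (∑' n : ℕ, ENNReal.ofReal
      (Real.exp (α * (n + 1)) * (probCgt G δ v₁ n - probCgt G δ v₁ (n + 1)))) +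
    (if 0 < α then (⊤ : ℝ≥0∞) else if α = 0 then 1 else 0) *
      ENNReal.ofReal (⨅ n : ℕ, probCgt G δ v₁ n)

/-- The critical exponent `α_c(δ)` attached to a family `𝒮₀` of edge sets. -/
def alphaC (G : SimpleGraph V) [DecidableRel G.Adj] (δ : ℝ)
    (S0 : Set (Finset (Sym2 V))) : EReal :=
  sInf { c : EReal | ∃ (ν : ProbMeas V) (F : Finset (Sym2 V)) (q : V → V → ℝ),
    F ∈ S0 ∧ q ∈ TE F ∧ (∀ x, ν.1 x ≠ 0 → memVerts F x) ∧ Invariant ν.1 q ∧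
    c = relEntInt ν.1 q (phat G δ F) }

/-- `α_c^1(δ)`: the critical exponent for the cover time. -/
def alphaC1 (G : SimpleGraph V) [DecidableRel G.Adj] (v₁ : V) (δ : ℝ) : EReal :=
  alphaC G δ (scrS G v₁ \ {G.edgeFinset})

end Graph

section Lifted

variable {V : Type} [Fintype V] [LinearOrder V]

/-- Smaller endpoint of an unordered pair. -/
def sym2lo (e : Sym2 V) : V := Sym2.lift ⟨fun a b => min a b, fun a b => min_comm a b⟩ e

/-- Larger endpoint of an unordered pair. -/
def sym2hi (e : Sym2 V) : V := Sym2.lift ⟨fun a b => max a b, fun a b => max_comm a b⟩ e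

/-- `V_S = E × {-1, 1}`: vertex set of the lifted directed graph `S`
(`true` plays the role of `+1`). -/
abbrev VSet (G : SimpleGraph V) [DecidableRel G.Adj] : Type :=
  {e : Sym2 V // e ∈ G.edgeFinset} × Bool

/-- Tail `z⁻` of an oriented edge. -/
def zm (G : SimpleGraph V) [DecidableRel G.Adj] (z : VSet G) : V :=
  if z.2 then sym2lo z.1.1 else sym2hi z.1.1

/-- Head `z⁺` of an oriented edge. -/
def zp (G : SimpleGraph V) [DecidableRel G.Adj] (z : VSet G) : V :=
  if z.2 then sym2hi z.1.1 else sym2lo z.1.1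

/-- The kernel `p_F` on the lifted directed graph `S`. -/
def pS (G : SimpleGraph V) [DecidableRel G.Adj] (δ : ℝ) (F : Finset (Sym2 V))
    (z₁ z₂ : VSet G) : ℝ :=
  if zp G z₁ = zm G z₂ then
    gw δ F z₂.1.1 / ∑ w : VSet G, (if zp G z₁ = zm G w then gw δ F w.1.1 else 0)
  else 0

/-- `𝒯_S`: stochastic matrices on `V_S` moving along orientations. -/
def TS (G : SimpleGraph V) [DecidableRel G.Adj] : Set (VSet G → VSet G → ℝ) :=
  {q | (∀ z w, 0 ≤ q z w) ∧ (∀ z, ∑ w, q z w = 1) ∧ ∀ z w, q z w ≠ 0 → zp G z = zm G w}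

/-- `𝒞(𝒮₀)`: probability measures on `V_S` whose first marginal is supported in
some member of `𝒮₀`. -/
def CC (G : SimpleGraph V) [DecidableRel G.Adj] (S0 : Set (Finset (Sym2 V))) :
    Set (ProbMeas (VSet G)) :=
  {μ | ∃ F ∈ S0, ∀ z : VSet G, μ.1 z ≠ 0 → z.1.1 ∈ F}

/-- `Λ_{δ,𝒮₀}`. -/
def Lam (G : SimpleGraph V) [DecidableRel G.Adj] (v₁ : V) (δ : ℝ)
    (S0 : Set (Finset (Sym2 V))) (μ : ProbMeas (VSet G)) : EReal :=
  sInf { c : EReal |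
    ∃ (μs : Fin G.edgeFinset.card → ProbMeas (VSet G)) (r : Fin G.edgeFinset.card → ℝ)
      (Es : Fin G.edgeFinset.card → Finset (Sym2 V))
      (qs : Fin G.edgeFinset.card → VSet G → VSet G → ℝ),
      Es ∈ seqE G v₁ ∧ (∀ k, 0 ≤ r k) ∧ (∀ k, Es k ∉ S0 → r k = 0) ∧ (∑ k, r k = 1) ∧
      (∀ k z, (μs k).1 z ≠ 0 → z.1.1 ∈ Es k) ∧
      (∀ z, ∑ k, r k * (μs k).1 z = μ.1 z) ∧
      (∀ k, qs k ∈ TS G) ∧ (∀ k, Invariant (μs k).1 (qs k)) ∧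
      c = ∑ k, ((r k : ℝ) : EReal) * relEntInt (μs k).1 (qs k) (pS G δ (Es k)) }

/-- `Λ^z_{δ,𝒮₀}`. -/
def LamZ (G : SimpleGraph V) [DecidableRel G.Adj] (v₁ : V) (δ : ℝ)
    (S0 : Set (Finset (Sym2 V))) (z : VSet G) (μ : ProbMeas (VSet G)) : EReal :=
  sInf { c : EReal |
    ∃ (μs : Fin G.edgeFinset.card → ProbMeas (VSet G)) (r : Fin G.edgeFinset.card → ℝ)
      (Es : Fin G.edgeFinset.card → Finset (Sym2 V))
      (qs : Fin G.edgeFinset.card → VSet G → VSet G → ℝ),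
      Es ∈ seqE G v₁ ∧ (∀ k : Fin G.edgeFinset.card, (k : ℕ) = 0 → Es k = {z.1.1}) ∧
      (∀ k, 0 ≤ r k) ∧ (∀ k, Es k ∉ S0 → r k = 0) ∧ (∑ k, r k = 1) ∧
      (∀ k w, (μs k).1 w ≠ 0 → w.1.1 ∈ Es k) ∧
      (∀ w, ∑ k, r k * (μs k).1 w = μ.1 w) ∧
      (∀ k, qs k ∈ TS G) ∧ (∀ k, Invariant (μs k).1 (qs k)) ∧
      c = ∑ k, ((r k : ℝ) : EReal) * relEntInt (μs k).1 (qs k) (pS G δ (Es k)) }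

/-- `Λ₁`: the Donsker–Varadhan functional for the simple random walk on `S`
(whose kernel is `pS` with `δ = 1`). -/
def Lam1 (G : SimpleGraph V) [DecidableRel G.Adj] (μ : ProbMeas (VSet G)) : EReal :=
  sInf { c : EReal | ∃ q ∈ TS G, Invariant μ.1 q ∧ c = relEntInt μ.1 q (pS G 1 ∅) }

/-- Boundary `∂F` of an edge set: edges of `F` adjacent to some edge outside `F`. -/
def bdry (G : SimpleGraph V) [DecidableRel G.Adj] (F : Finset (Sym2 V)) : Finset (Sym2 V) :=
  F.filter fun e => ∃ e' ∈ G.edgeFinset \ F, edgeAdj e e'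

/-- Out-degree `d(z)` of `z` in `S`. -/
def outDeg (G : SimpleGraph V) [DecidableRel G.Adj] (z : VSet G) : ℕ :=
  (Finset.univ.filter (fun w : VSet G => zp G z = zm G w)).card

/-- Number `k(z)` of out-neighbours of `z` lying in `F × {-1, 1}`. -/
def outDegIn (G : SimpleGraph V) [DecidableRel G.Adj] (F : Finset (Sym2 V))
    (z : VSet G) : ℕ :=
  (Finset.univ.filter (fun w : VSet G => zp G z = zm G w ∧ w.1.1 ∈ F)).card

/-- The law of `(Z_0, …, Z_n)` for the lifted `δ`-ORRW conditioned on `Z_0 = z`. -/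
def liftTraj (G : SimpleGraph V) [DecidableRel G.Adj] (δ : ℝ) (z : VSet G) (n : ℕ)
    (g : Fin (n + 1) → VSet G) : ℝ :=
  if g 0 = z then
    ∏ i : Fin n,
      pS G δ ((Finset.Iic i.castSucc).image (fun j => (g j).1.1))
        (g i.castSucc) (g i.succ)
  else 0

/-- The restricted logarithmic Laplace functional `W^{n+1}_{𝒮₀}(z)`. -/
def Wres (G : SimpleGraph V) [DecidableRel G.Adj] (δ : ℝ) (z : VSet G)
    (S0 : Set (Finset (Sym2 V))) (h : ProbMeas (VSet G) → ℝ) (n : ℕ) : EReal :=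
  if 0 < ∑ g : Fin (n + 1) → VSet G,
      (if empMeas n g ∈ CC G S0 then liftTraj G δ z n g else 0) then
    ((-((((n : ℝ) + 1))⁻¹ * Real.log (∑ g : Fin (n + 1) → VSet G,
      if empMeas n g ∈ CC G S0 then
        Real.exp (-((n : ℝ) + 1) * h (empMeas n g)) * liftTraj G δ z n g
      else 0)) : ℝ) : EReal)
  else (⊤ : EReal)

end Lifted

/-!
In terms of the pair measure `m = μ ⊗ q` the cost `∫ R(q‖p_F) dμ` is a continuous function on the
compact convex set of stationary pair measures on `F`, and `δ` enters only through
`∑ z, μ z * log (k z + (d z - k z) / δ)`. The infimum of `Λ` is the minimum of these costs over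
`F ∈ 𝒮₀`, since every such `F` is a stage of some exhaustion of `G`.

At a minimizer every transition out of a charged point is charged, because `t ↦ t log t` has slope
`-∞` at `0`. Hence a minimizer reaches every vertex of `F`, in particular one with `k z < d z`, and
there the cost is strictly decreasing in `δ`.

As `δ → 0`, charging a point with `k z < d z` costs at least `-log δ` times its mass. The measures
that charge none are those avoiding `∂F`, and on them the cost does not depend on `δ`; compactness
makes the passage to the limit uniform.
-/

section PairMeasures

lemma exists_tendsto_slope_mul_log {x y : ℝ} (hx : 0 ≤ x) (hy : 0 ≤ y) :
    ∃ c, Tendsto (fun t : ℝ => (((1 - t) * x + t * y) * Real.log ((1 - t) * x + t * y) -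
      x * Real.log x) / t - (if x = 0 then y else 0) * Real.log t) (𝓝[>] 0) (𝓝 c) := by
  rcases hx.eq_or_lt with rfl | hx
  · refine ⟨y * Real.log y, tendsto_const_nhds.congr' ?_⟩
    filter_upwards [self_mem_nhdsWithin] with t (ht : 0 < t)
    rcases hy.eq_or_lt with rfl | hy
    · simp
    · simp only [mul_zero, zero_add, if_true, zero_mul, sub_zero]
      rw [Real.log_mul ht.ne' hy.ne']
      field_simp
      ring
  · have hasDerivAt_segment : HasDerivAt (fun t : ℝ => (1 - t) * x + t * y) (-1 * x + 1 * y) 0 :=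
      (((hasDerivAt_id (0 : ℝ)).const_sub 1).mul_const x).add
        ((hasDerivAt_id (0 : ℝ)).mul_const y)
    have hasDerivAt_mul_log : HasDerivAt (fun s : ℝ => s * Real.log s) (Real.log x + 1)
        ((fun t : ℝ => (1 - t) * x + t * y) 0) := by
      simpa using Real.hasDerivAt_mul_log hx.ne'
    refine ⟨_, (hasDerivAt_mul_log.comp 0 hasDerivAt_segment).tendsto_slope_zero_right.congr ?_⟩
    intro t
    simp [hx.ne', div_eq_inv_mul]

variable {A B : Type*} [Fintype B] {m n : A → B → ℝ}

/-- The first marginal of a measure on `A × B`, written as a matrix. -/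
def marginal (m : A → B → ℝ) (a : A) : ℝ := ∑ b, m a b

lemma marginal_nonneg (hm : ∀ a b, 0 ≤ m a b) (a : A) : 0 ≤ marginal m a :=
  Finset.sum_nonneg fun b _ => hm a b

lemma le_marginal (hm : ∀ a b, 0 ≤ m a b) (a : A) (b : B) : m a b ≤ marginal m a :=
  Finset.single_le_sum (fun b _ => hm a b) (Finset.mem_univ b)

lemma eq_zero_of_marginal_eq_zero (hm : ∀ a b, 0 ≤ m a b) {a : A} (ha : marginal m a = 0) (b : B) :
    m a b = 0 :=
  le_antisymm (ha ▸ le_marginal hm a b) (hm a b)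

lemma marginal_smul_add_smul (m n : A → B → ℝ) (s t : ℝ) (a : A) :
    marginal (s • m + t • n) a = s * marginal m a + t * marginal n a := by
  simp only [marginal, Pi.add_apply, Pi.smul_apply, smul_eq_mul, Finset.sum_add_distrib,
    Finset.mul_sum]

lemma continuous_marginal (a : A) : Continuous fun m : A → B → ℝ => marginal m a := by
  unfold marginal
  fun_prop

lemma marginal_mul_le {U W : A → ℝ} (hm : ∀ a b, 0 ≤ m a b)
    (hUW : ∀ a, marginal m a ≠ 0 → U a ≤ W a) (a : A) :
    marginal m a * U a ≤ marginal m a * W a := by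
  by_cases ha : marginal m a = 0
  · simp only [ha, zero_mul, le_refl]
  · exact mul_le_mul_of_nonneg_left (hUW a ha) (marginal_nonneg hm a)

lemma sum_missing_eq_sub (hm : ∀ a b, 0 ≤ m a b) (a : A) :
    (if marginal m a = 0 then 0 else ∑ b, if m a b = 0 then n a b else 0) =
      (∑ b, if m a b = 0 then n a b else 0) - if marginal m a = 0 then marginal n a else 0 := by
  split_ifs with ha
  · simp only [eq_zero_of_marginal_eq_zero hm ha, if_true, marginal, sub_self]
  · rw [sub_zero]

variable [Fintype A]

/-- The Donsker–Varadhan cost `∫ R(q‖p) dμ` as a function of the pair measure `m = μ ⊗ q`, for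
reference kernels with `p(a, b) = exp (-U a)` on the support of `m`. Unlike `(μ, q)`, the pair
measure ranges over a compact convex set, on which the cost is continuous. -/
def pairEnergy (U : A → ℝ) (m : A → B → ℝ) : ℝ :=
  ∑ a, (∑ b, m a b * Real.log (m a b) - marginal m a * Real.log (marginal m a) + marginal m a * U a)

/-- The mass that `n` puts on transitions which `m` does not charge although it charges their
starting point. -/
def missingMass (m n : A → B → ℝ) : ℝ :=
  ∑ a, if marginal m a = 0 then 0 else ∑ b, if m a b = 0 then n a b else 0

lemma continuous_pairEnergy (U : A → ℝ) : Continuous (pairEnergy U : (A → B → ℝ) → ℝ) := by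
  refine continuous_finsetSum _ fun a _ => .add (.sub ?_ ?_) ?_
  · exact continuous_finsetSum _ fun b _ => Real.continuous_mul_log.comp (by fun_prop)
  · exact Real.continuous_mul_log.comp (continuous_marginal a)
  · exact (continuous_marginal a).mul_const _

lemma pairEnergy_eq_add_sum (U : A → ℝ) (m : A → B → ℝ) :
    pairEnergy U m = pairEnergy 0 m + ∑ a, marginal m a * U a := by
  simp only [pairEnergy, Pi.zero_apply, mul_zero, add_zero, Finset.sum_add_distrib]

lemma pairEnergy_single [DecidableEq A] (a : A) (c : ℝ) (m : A → B → ℝ) :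
    pairEnergy (Pi.single a c) m = pairEnergy 0 m + marginal m a * c := by
  rw [pairEnergy_eq_add_sum, Finset.sum_eq_single a (by simp +contextual) (by simp),
    Pi.single_eq_same]

lemma pairEnergy_mono {U W : A → ℝ} (hm : ∀ a b, 0 ≤ m a b)
    (hUW : ∀ a, marginal m a ≠ 0 → U a ≤ W a) : pairEnergy U m ≤ pairEnergy W m := by
  rw [pairEnergy_eq_add_sum U, pairEnergy_eq_add_sum W]
  exact add_le_add_right (Finset.sum_le_sum fun a _ => marginal_mul_le hm hUW a) _

lemma pairEnergy_strictMono {U W : A → ℝ} (hm : ∀ a b, 0 ≤ m a b)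
    (hUW : ∀ a, marginal m a ≠ 0 → U a ≤ W a) {a : A} (ha : marginal m a ≠ 0) (hlt : U a < W a) :
    pairEnergy U m < pairEnergy W m := by
  rw [pairEnergy_eq_add_sum U, pairEnergy_eq_add_sum W]
  refine add_lt_add_right (Finset.sum_lt_sum (fun a _ => marginal_mul_le hm hUW a)
    ⟨a, Finset.mem_univ a, ?_⟩) _
  exact mul_lt_mul_of_pos_left hlt ((marginal_nonneg hm a).lt_of_ne' ha)

lemma missingMass_pos (hn : ∀ a b, 0 ≤ n a b) {a : A} {b : B}
    (ha : marginal m a ≠ 0) (hmab : m a b = 0) (hnab : 0 < n a b) : 0 < missingMass m n := by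
  have row_nonneg (a : A) (b : B) : 0 ≤ if m a b = 0 then n a b else 0 := by
    split_ifs
    exacts [hn a b, le_rfl]
  refine Finset.sum_pos' (fun a _ => ?_) ⟨a, Finset.mem_univ a, ?_⟩
  · split_ifs
    exacts [le_rfl, Finset.sum_nonneg fun b _ => row_nonneg a b]
  · rw [if_neg ha]
    exact Finset.sum_pos' (fun b _ => row_nonneg a b)
      ⟨b, Finset.mem_univ b, by rwa [if_pos hmab]⟩

lemma exists_tendsto_slope_pairEnergy (U : A → ℝ) (hm : ∀ a b, 0 ≤ m a b) (hn : ∀ a b, 0 ≤ n a b) :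
    ∃ c, Tendsto (fun t : ℝ => (pairEnergy U ((1 - t) • m + t • n) - pairEnergy U m) / t -
      missingMass m n * Real.log t) (𝓝[>] 0) (𝓝 c) := by
  choose c hc using fun a b => exists_tendsto_slope_mul_log (hm a b) (hn a b)
  choose d hd using fun a =>
    exists_tendsto_slope_mul_log (marginal_nonneg hm a) (marginal_nonneg hn a)
  have htendsto := tendsto_finsetSum Finset.univ fun a _ =>
    ((tendsto_finsetSum Finset.univ fun b _ => hc a b).sub (hd a)).add
      (tendsto_const_nhds (x := (marginal n a - marginal m a) * U a) (f := 𝓝[>] (0 : ℝ)))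
  refine ⟨_, htendsto.congr' ?_⟩
  filter_upwards [self_mem_nhdsWithin] with t (ht : 0 < t)
  rw [missingMass, pairEnergy, pairEnergy, ← Finset.sum_sub_distrib, Finset.sum_div,
    Finset.sum_mul, ← Finset.sum_sub_distrib]
  refine Finset.sum_congr rfl fun a _ => ?_
  rw [sum_missing_eq_sub hm, marginal_smul_add_smul]
  simp only [Pi.add_apply, Pi.smul_apply, smul_eq_mul, Finset.sum_sub_distrib, ← Finset.sum_div,
    ← Finset.sum_mul]
  field_simp
  ring

/- Charging a new transition costs `t log t`, which beats every linear term as `t → 0+`. -/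
lemma eventually_pairEnergy_lt (U : A → ℝ) (hm : ∀ a b, 0 ≤ m a b) (hn : ∀ a b, 0 ≤ n a b)
    {a : A} {b : B} (ha : marginal m a ≠ 0) (hmab : m a b = 0) (hnab : 0 < n a b) :
    ∀ᶠ t : ℝ in 𝓝[>] 0, pairEnergy U ((1 - t) • m + t • n) < pairEnergy U m := by
  obtain ⟨c, hc⟩ := exists_tendsto_slope_pairEnergy U hm hn
  have hlog : Tendsto (fun t : ℝ => missingMass m n * Real.log t) (𝓝[>] 0) atBot :=
    Real.tendsto_log_nhdsGT_zero.const_mul_atBot (missingMass_pos hn ha hmab hnab)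
  filter_upwards [(hc.add_atBot hlog).eventually (eventually_lt_atBot 0), self_mem_nhdsWithin]
    with t hslope (ht : 0 < t)
  rw [sub_add_cancel, div_lt_iff₀ ht, zero_mul] at hslope
  exact sub_neg.1 hslope

end PairMeasures

section StationaryPairs

variable {A : Type}

/-- The empirical measure of the transitions `c i → c (σ i)`: a union of closed walks, indexed by
the cycles of `σ`. -/
def cyclePair {ι : Type*} [Fintype ι] (σ : Equiv.Perm ι) (c : ι → A) (a b : A) : ℝ :=
  (∑ i, if c i = a ∧ c (σ i) = b then 1 else 0) / Fintype.card ι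

lemma cyclePair_pos {ι : Type*} [Fintype ι] (σ : Equiv.Perm ι) (c : ι → A) (i : ι) :
    0 < cyclePair σ c (c i) (c (σ i)) := by
  have : Nonempty ι := ⟨i⟩
  refine div_pos (Finset.sum_pos' (fun j _ => ?_) ⟨i, Finset.mem_univ i, ?_⟩)
    (Nat.cast_pos.2 Fintype.card_pos)
  · split_ifs <;> simp
  · simp

variable [Fintype A]

/-- `m` is the law of two consecutive steps of a stationary Markov chain on `A` all of whose
transitions satisfy `R`. -/
structure IsStationaryPair (R : A → A → Prop) (m : A → A → ℝ) : Prop where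
  nonneg : ∀ a b, 0 ≤ m a b
  sum_marginal : ∑ a, marginal m a = 1
  rel : ∀ a b, m a b ≠ 0 → R a b
  balance : ∀ b, ∑ a, m a b = marginal m b

/-- A transition kernel whose product with `marginal m` is `m`; at points of zero mass it moves
along `next`. -/
def condKernel (next : A → A) (m : A → A → ℝ) (a b : A) : ℝ :=
  if marginal m a = 0 then if b = next a then 1 else 0 else m a b / marginal m a

variable {R : A → A → Prop} {m : A → A → ℝ}

namespace IsStationaryPair

lemma marginal_right_ne_zero (hm : IsStationaryPair R m) {a b : A} (hab : m a b ≠ 0) :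
    marginal m b ≠ 0 := by
  rw [← hm.balance b]
  exact fun h => hab ((Finset.sum_eq_zero_iff_of_nonneg fun a _ => hm.nonneg a b).1 h a
    (Finset.mem_univ a))

lemma exists_marginal_ne_zero (hm : IsStationaryPair R m) : ∃ a, marginal m a ≠ 0 := by
  obtain ⟨a, -, ha⟩ := Finset.exists_ne_zero_of_sum_ne_zero (hm.sum_marginal ▸ one_ne_zero)
  exact ⟨a, ha⟩

lemma exists_pred (hm : IsStationaryPair R m) {b : A} (hb : marginal m b ≠ 0) :
    ∃ a, marginal m a ≠ 0 ∧ R a b := by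
  obtain ⟨a, -, hab⟩ := Finset.exists_ne_zero_of_sum_ne_zero (hm.balance b ▸ hb)
  exact ⟨a, fun h => hab (eq_zero_of_marginal_eq_zero hm.nonneg h b), hm.rel a b hab⟩

/-- The stationary law of a stationary pair measure. -/
def toProbMeas (hm : IsStationaryPair R m) : ProbMeas A :=
  ⟨marginal m, marginal_nonneg hm.nonneg, hm.sum_marginal⟩

end IsStationaryPair

lemma convex_setOf_isStationaryPair (R : A → A → Prop) : Convex ℝ {m | IsStationaryPair R m} := by
  intro m hm n hn s t hs ht hst
  refine ⟨fun a b => ?_, ?_, fun a b hab => ?_, fun b => ?_⟩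
  · exact add_nonneg (mul_nonneg hs (hm.nonneg a b)) (mul_nonneg ht (hn.nonneg a b))
  · simp only [marginal_smul_add_smul, Finset.sum_add_distrib, ← Finset.mul_sum,
      hm.sum_marginal, hn.sum_marginal, mul_one, hst]
  · by_contra hR
    have hmab : m a b = 0 := not_not.1 (mt (hm.rel a b) hR)
    have hnab : n a b = 0 := not_not.1 (mt (hn.rel a b) hR)
    exact hab (by simp [hmab, hnab])
  · simp only [marginal_smul_add_smul, Pi.add_apply, Pi.smul_apply, smul_eq_mul,
      Finset.sum_add_distrib, ← Finset.mul_sum, hm.balance, hn.balance]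

lemma isClosed_setOf_isStationaryPair (R : A → A → Prop) :
    IsClosed {m | IsStationaryPair R m} := by
  have heq : {m | IsStationaryPair R m} = {m | ∀ a b, 0 ≤ m a b} ∩ {m | ∑ a, marginal m a = 1} ∩
      {m | ∀ a b, ¬ R a b → m a b = 0} ∩ {m | ∀ b, ∑ a, m a b = marginal m b} := by
    ext m
    exact ⟨fun h => ⟨⟨⟨h.1, h.2⟩, fun a b => not_imp_comm.1 (h.3 a b)⟩, h.4⟩,
      fun h => ⟨h.1.1.1, h.1.1.2, fun a b => not_imp_comm.1 (h.1.2 a b), h.2⟩⟩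
  simp only [heq, Set.ofPred_forall]
  refine ((IsClosed.inter ?_ ?_).inter ?_).inter ?_
  · exact isClosed_iInter fun a => isClosed_iInter fun b =>
      isClosed_le continuous_const (by fun_prop)
  · exact isClosed_eq (continuous_finsetSum _ fun a _ => continuous_marginal a) continuous_const
  · exact isClosed_iInter fun a => isClosed_iInter fun b => isClosed_iInter fun _ =>
      isClosed_eq (by fun_prop) continuous_const
  · exact isClosed_iInter fun b => isClosed_eq (by fun_prop) (continuous_marginal b)

lemma isCompact_setOf_isStationaryPair (R : A → A → Prop) :
    IsCompact {m | IsStationaryPair R m} := by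
  have hcube : IsCompact (Set.univ.pi fun _ : A => Set.univ.pi fun _ : A => Set.Icc (0 : ℝ) 1) :=
    isCompact_univ_pi fun _ => isCompact_univ_pi fun _ => isCompact_Icc
  refine hcube.of_isClosed_subset (isClosed_setOf_isStationaryPair R) fun m hm a _ b _ => ?_
  have hle_one : marginal m a ≤ 1 := by
    rw [← hm.sum_marginal]
    exact Finset.single_le_sum (fun a _ => marginal_nonneg hm.nonneg a) (Finset.mem_univ a)
  exact ⟨hm.nonneg a b, (le_marginal hm.nonneg a b).trans hle_one⟩

lemma exists_isMinOn_pairEnergy (U : A → ℝ) (hR : ∃ m, IsStationaryPair R m) :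
    ∃ m, IsStationaryPair R m ∧ IsMinOn (pairEnergy U) {m | IsStationaryPair R m} m :=
  (isCompact_setOf_isStationaryPair R).exists_isMinOn hR (continuous_pairEnergy U).continuousOn

lemma IsStationaryPair.ne_zero_of_isMinOn {U : A → ℝ} (hm : IsStationaryPair R m)
    (hmin : IsMinOn (pairEnergy U) {m | IsStationaryPair R m} m) {n : A → A → ℝ}
    (hn : IsStationaryPair R n) {a b : A} (ha : marginal m a ≠ 0) (hnab : 0 < n a b) :
    m a b ≠ 0 := by
  intro hmab
  obtain ⟨t, hlt, ht⟩ := ((eventually_pairEnergy_lt U hm.nonneg hn.nonneg ha hmab hnab).and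
    (Ioo_mem_nhdsGT zero_lt_one)).exists
  exact (hmin (convex_setOf_isStationaryPair R hm hn (sub_nonneg.2 ht.2.le) ht.1.le
    (sub_add_cancel 1 t))).not_gt hlt

lemma isStationaryPair_cyclePair {ι : Type*} [Fintype ι] [Nonempty ι] (σ : Equiv.Perm ι)
    (c : ι → A) (hR : ∀ i, R (c i) (c (σ i))) : IsStationaryPair R (cyclePair σ c) := by
  have hmarginal (a : A) :
      marginal (cyclePair σ c) a = (∑ i, if c i = a then 1 else 0) / Fintype.card ι := by
    simp only [marginal, cyclePair, ← Finset.sum_div, ite_and]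
    rw [Finset.sum_comm]
    simp
  refine ⟨fun a b => ?_, ?_, fun a b hab => ?_, fun b => ?_⟩
  · exact div_nonneg (Finset.sum_nonneg fun i _ => by split_ifs <;> simp) (Nat.cast_nonneg _)
  · simp only [hmarginal, ← Finset.sum_div]
    rw [Finset.sum_comm]
    simp
  · obtain ⟨i, -, hi⟩ := Finset.exists_ne_zero_of_sum_ne_zero (div_ne_zero_iff.1 hab).1
    obtain ⟨rfl, rfl⟩ : c i = a ∧ c (σ i) = b := by
      by_contra h
      exact hi (if_neg h)
    exact hR i
  · rw [hmarginal, ← Equiv.sum_comp σ]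
    simp only [cyclePair, ← Finset.sum_div]
    rw [Finset.sum_comm]
    simp [ite_and]

lemma marginal_mul_kernel {ν : A → ℝ} {q : A → A → ℝ} (hq : ∀ a, ∑ b, q a b = 1) :
    (marginal fun a b => ν a * q a b) = ν := by
  funext a
  rw [marginal, ← Finset.mul_sum, hq, mul_one]

lemma isStationaryPair_mul_kernel (ν : ProbMeas A) {q : A → A → ℝ} (hq : ∀ a b, 0 ≤ q a b)
    (hq_sum : ∀ a, ∑ b, q a b = 1) (hinv : Invariant ν.1 q)
    (hR : ∀ a b, ν.1 a ≠ 0 → ν.1 b ≠ 0 → q a b ≠ 0 → R a b) :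
    IsStationaryPair R fun a b => ν.1 a * q a b := by
  have hnonneg (a b : A) : 0 ≤ ν.1 a * q a b := mul_nonneg (ν.2.1 a) (hq a b)
  refine ⟨hnonneg, ?_, fun a b hab => ?_, fun b => ?_⟩
  · rw [marginal_mul_kernel hq_sum]
    exact ν.2.2
  · refine hR a b (left_ne_zero_of_mul hab) (fun hb => hab ?_) (right_ne_zero_of_mul hab)
    exact (Finset.sum_eq_zero_iff_of_nonneg fun a _ => hnonneg a b).1 ((hinv b).trans hb) a
      (Finset.mem_univ a)
  · rw [marginal_mul_kernel hq_sum]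
    exact hinv b

lemma condKernel_nonneg (next : A → A) (hm : ∀ a b, 0 ≤ m a b) (a b : A) :
    0 ≤ condKernel next m a b := by
  rw [condKernel]
  split_ifs
  exacts [zero_le_one, le_rfl, div_nonneg (hm a b) (marginal_nonneg hm a)]

lemma sum_condKernel (next : A → A) (m : A → A → ℝ) (a : A) : ∑ b, condKernel next m a b = 1 := by
  by_cases ha : marginal m a = 0
  · simp [condKernel, ha]
  · simp only [condKernel, if_neg ha, ← Finset.sum_div]
    exact div_self ha

lemma marginal_mul_condKernel (next : A → A) (hm : ∀ a b, 0 ≤ m a b) (a b : A) :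
    marginal m a * condKernel next m a b = m a b := by
  by_cases ha : marginal m a = 0
  · rw [ha, zero_mul, eq_zero_of_marginal_eq_zero hm ha]
  · rw [condKernel, if_neg ha, mul_div_cancel₀ _ ha]

lemma eq_next_or_ne_zero_of_condKernel_ne_zero {next : A → A} {a b : A}
    (h : condKernel next m a b ≠ 0) : b = next a ∨ m a b ≠ 0 := by
  contrapose! h
  simp [condKernel, h.1, h.2]

lemma ereal_coe_sum {ι : Type*} (s : Finset ι) (f : ι → ℝ) :
    ((∑ i ∈ s, f i : ℝ) : EReal) = ∑ i ∈ s, (f i : EReal) :=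
  map_sum (⟨⟨Real.toEReal, EReal.coe_zero⟩, EReal.coe_add⟩ : ℝ →+ EReal) f s

lemma relEntInt_eq_coe {ν : A → ℝ} {q p : A → A → ℝ} (hac : ∀ a b, p a b = 0 → q a b = 0) :
    relEntInt ν q p = ((∑ a, ν a * ∑ b, q a b * Real.log (q a b / p a b) : ℝ) : EReal) := by
  simp only [relEntInt, relEnt, if_pos (hac _), ereal_coe_sum, EReal.coe_mul]

lemma relEntInt_eq_pairEnergy {ν : A → ℝ} {q p : A → A → ℝ} {U : A → ℝ}
    (hq : ∀ a, ∑ b, q a b = 1) (hac : ∀ a b, p a b = 0 → q a b = 0)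
    (hp : ∀ a b, ν a * q a b ≠ 0 → p a b = Real.exp (-U a)) :
    relEntInt ν q p = (pairEnergy U (fun a b => ν a * q a b) : EReal) := by
  rw [relEntInt_eq_coe hac, pairEnergy, marginal_mul_kernel hq]
  congr 1
  refine Finset.sum_congr rfl fun a _ => ?_
  have hterm (b : A) : ν a * (q a b * Real.log (q a b / p a b)) =
      ν a * q a b * Real.log (ν a * q a b) - q a b * (ν a * Real.log (ν a)) +
        q a b * (ν a * U a) := by
    by_cases h : ν a * q a b = 0
    · rcases mul_eq_zero.1 h with h | h <;> simp [h]
    · have hν := left_ne_zero_of_mul h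
      have hqab := right_ne_zero_of_mul h
      rw [hp a b h, Real.log_div hqab (Real.exp_ne_zero _), Real.log_exp, Real.log_mul hν hqab]
      ring
  rw [Finset.mul_sum, Finset.sum_congr rfl fun b _ => hterm b, Finset.sum_add_distrib,
    Finset.sum_sub_distrib, ← Finset.sum_mul, ← Finset.sum_mul, hq, one_mul, one_mul]

end StationaryPairs

section LiftedGraph

variable {V : Type} [Fintype V] [LinearOrder V] {G : SimpleGraph V} [DecidableRel G.Adj]
  {F : Finset (Sym2 V)} {δ : ℝ}

/-- The same edge traversed in the opposite direction. -/
def reverse (z : VSet G) : VSet G := (z.1, !z.2)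

lemma zm_reverse (z : VSet G) : zm G (reverse z) = zp G z := by
  cases h : z.2 <;> simp [zm, zp, reverse, h]

lemma zp_reverse (z : VSet G) : zp G (reverse z) = zm G z := by
  cases h : z.2 <;> simp [zm, zp, reverse, h]

lemma edge_eq (z : VSet G) : z.1.1 = s(zm G z, zp G z) := by
  obtain ⟨⟨e, he⟩, b⟩ := z
  induction e with
  | _ x y => cases b <;> rcases le_total x y with h | h <;> simp [zm, zp, sym2lo, sym2hi, h]

lemma zm_mem (z : VSet G) : zm G z ∈ z.1.1 := edge_eq z ▸ Sym2.mem_mk_left _ _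

lemma zp_mem (z : VSet G) : zp G z ∈ z.1.1 := edge_eq z ▸ Sym2.mem_mk_right _ _

lemma exists_zm_eq {e : Sym2 V} (he : e ∈ G.edgeFinset) {v : V} (hv : v ∈ e) :
    ∃ w : VSet G, w.1.1 = e ∧ zm G w = v := by
  have hmem : v ∈ s(zm G (⟨e, he⟩, true), zp G (⟨e, he⟩, true)) := edge_eq (G := G) _ ▸ hv
  rcases Sym2.mem_iff.1 hmem with rfl | rfl
  · exact ⟨(⟨e, he⟩, true), rfl, rfl⟩
  · exact ⟨reverse (⟨e, he⟩, true), rfl, zm_reverse _⟩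

variable (G) in
/-- The transitions of `S` between orientations of edges of `F`. -/
def StepIn (F : Finset (Sym2 V)) (z w : VSet G) : Prop :=
  zp G z = zm G w ∧ z.1.1 ∈ F ∧ w.1.1 ∈ F

/- The step `a → b` closes up to the walk `a → b → b⁻¹ → a⁻¹ → a`. -/
lemma exists_isStationaryPair_pos {a b : VSet G} (hab : StepIn G F a b) :
    ∃ m, IsStationaryPair (StepIn G F) m ∧ 0 < m a b := by
  refine ⟨cyclePair (finRotate 4) ![a, b, reverse b, reverse a],
    isStationaryPair_cyclePair _ _ fun i => ?_, cyclePair_pos (finRotate 4) _ 0⟩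
  obtain ⟨hstep, ha, hb⟩ := hab
  fin_cases i
  · exact ⟨hstep, ha, hb⟩
  · exact ⟨(zm_reverse b).symm, hb, hb⟩
  · exact ⟨((zp_reverse b).trans hstep.symm).trans (zm_reverse a).symm, hb, ha⟩
  · exact ⟨zp_reverse a, ha, ha⟩

lemma exists_isStationaryPair (hF : F ⊆ G.edgeFinset) (hne : F.Nonempty) :
    ∃ m, IsStationaryPair (StepIn G F) m := by
  obtain ⟨e, he⟩ := hne
  let z : VSet G := (⟨e, hF he⟩, true)
  obtain ⟨m, hm, -⟩ := exists_isStationaryPair_pos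
    (show StepIn G F z (reverse z) from ⟨(zm_reverse z).symm, he, he⟩)
  exact ⟨m, hm⟩

lemma outDegIn_le_outDeg (F : Finset (Sym2 V)) (z : VSet G) : outDegIn G F z ≤ outDeg G z :=
  Finset.card_le_card (Finset.monotone_filter_right _ fun _ _ h => h.1)

lemma outDegIn_eq_outDeg_iff {z : VSet G} :
    outDegIn G F z = outDeg G z ↔ ∀ w : VSet G, zp G z = zm G w → w.1.1 ∈ F := by
  rw [outDegIn, outDeg, ← Finset.filter_filter, Finset.card_filter_eq_iff]
  simp

lemma outDegIn_pos {z : VSet G} (hz : z.1.1 ∈ F) : 0 < outDegIn G F z :=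
  Finset.card_pos.2
    ⟨reverse z, Finset.mem_filter.2 ⟨Finset.mem_univ _, (zm_reverse z).symm, hz⟩⟩

lemma sum_gw (δ : ℝ) (F : Finset (Sym2 V)) (z : VSet G) :
    (∑ w : VSet G, if zp G z = zm G w then gw δ F w.1.1 else 0) =
      outDegIn G F z * δ + (outDeg G z - outDegIn G F z) := by
  have hgw (w : VSet G) : (if zp G z = zm G w then gw δ F w.1.1 else 0) =
      (if zp G z = zm G w ∧ w.1.1 ∈ F then 1 else 0) * (δ - 1) +
        if zp G z = zm G w then 1 else 0 := by
    by_cases hstep : zp G z = zm G w <;> by_cases hw : w.1.1 ∈ F <;> simp [gw, hstep, hw]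
  rw [Finset.sum_congr rfl fun w _ => hgw w, Finset.sum_add_distrib, ← Finset.sum_mul,
    Finset.sum_boole, Finset.sum_boole, outDeg, outDegIn]
  ring

/-- The total weight of the transitions out of `z`, when those into `F` have weight `1` and the
others weight `1 / δ`. -/
def outWeight (δ : ℝ) (F : Finset (Sym2 V)) (z : VSet G) : ℝ :=
  outDegIn G F z + (outDeg G z - outDegIn G F z) / δ

lemma outDegIn_le_outWeight (hδ : 0 < δ) (F : Finset (Sym2 V)) (z : VSet G) :
    (outDegIn G F z : ℝ) ≤ outWeight δ F z :=
  le_add_of_nonneg_right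
    (div_nonneg (sub_nonneg.2 (Nat.cast_le.2 (outDegIn_le_outDeg F z))) hδ.le)

lemma one_le_outWeight (hδ : 0 < δ) {z : VSet G} (hz : z.1.1 ∈ F) : 1 ≤ outWeight δ F z :=
  le_trans (by exact_mod_cast outDegIn_pos hz) (outDegIn_le_outWeight hδ F z)

lemma outWeight_of_outDegIn_eq {z : VSet G} (hz : outDegIn G F z = outDeg G z) (δ : ℝ) :
    outWeight δ F z = outDeg G z := by
  rw [outWeight, hz, sub_self, zero_div, add_zero]

lemma outWeight_anti {δ₁ δ₂ : ℝ} (hδ₁ : 0 < δ₁) (h : δ₁ ≤ δ₂) (F : Finset (Sym2 V)) (z : VSet G) :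
    outWeight δ₂ F z ≤ outWeight δ₁ F z := by
  have := sub_nonneg.2 (Nat.cast_le (α := ℝ).2 (outDegIn_le_outDeg F z))
  unfold outWeight
  gcongr

lemma outWeight_strictAnti {δ₁ δ₂ : ℝ} (hδ₁ : 0 < δ₁) (h : δ₁ < δ₂) {z : VSet G}
    (hz : outDegIn G F z ≠ outDeg G z) : outWeight δ₂ F z < outWeight δ₁ F z := by
  have := sub_pos.2 (Nat.cast_lt (α := ℝ).2 ((outDegIn_le_outDeg F z).lt_of_ne hz))
  unfold outWeight
  gcongr

lemma inv_le_outWeight (hδ : 0 < δ) {z : VSet G} (hz : outDegIn G F z ≠ outDeg G z) :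
    δ⁻¹ ≤ outWeight δ F z := by
  have hone : (1 : ℝ) ≤ outDeg G z - outDegIn G F z := by
    rw [le_sub_iff_add_le']
    exact_mod_cast (outDegIn_le_outDeg F z).lt_of_ne hz
  calc δ⁻¹ = 1 / δ := (one_div δ).symm
    _ ≤ (outDeg G z - outDegIn G F z) / δ := by gcongr
    _ ≤ outWeight δ F z := le_add_of_nonneg_left (Nat.cast_nonneg _)

lemma sum_gw_eq_mul_outWeight (hδ : δ ≠ 0) (F : Finset (Sym2 V)) (z : VSet G) :
    (∑ w : VSet G, if zp G z = zm G w then gw δ F w.1.1 else 0) = δ * outWeight δ F z := by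
  rw [sum_gw, outWeight, mul_add, mul_div_cancel₀ _ hδ, mul_comm δ]

lemma pS_of_stepIn (hδ : 0 < δ) {z w : VSet G} (h : StepIn G F z w) :
    pS G δ F z w = Real.exp (-Real.log (outWeight δ F z)) := by
  obtain ⟨hstep, hz, hw⟩ := h
  rw [pS, if_pos hstep, sum_gw_eq_mul_outWeight hδ.ne', gw, if_pos hw, Real.exp_neg,
    Real.exp_log (zero_lt_one.trans_le (one_le_outWeight hδ hz)), div_mul_cancel_left₀ hδ.ne']

lemma zp_ne_zm_of_pS_eq_zero (hδ : 0 < δ) {z w : VSet G} (h : pS G δ F z w = 0) :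
    zp G z ≠ zm G w := by
  intro hstep
  have gw_pos (e : Sym2 V) : 0 < gw δ F e := by
    unfold gw
    split_ifs
    exacts [hδ, one_pos]
  rw [pS, if_pos hstep] at h
  refine (div_pos (gw_pos _) (Finset.sum_pos' (fun w _ => ?_) ⟨w, Finset.mem_univ w, ?_⟩)).ne' h
  · split_ifs
    exacts [(gw_pos _).le, le_rfl]
  · rw [if_pos hstep]
    exact gw_pos _

lemma pS_one (F : Finset (Sym2 V)) : pS G 1 F = pS G 1 ∅ := by
  funext z w
  simp only [pS, gw, ite_self]

end LiftedGraph

section Energy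

variable {V : Type} [Fintype V] [LinearOrder V] {G : SimpleGraph V} [DecidableRel G.Adj]
  {F : Finset (Sym2 V)} {δ : ℝ}

lemma isStationaryPair_of_mem_TS {μ : ProbMeas (VSet G)} {q : VSet G → VSet G → ℝ} (hq : q ∈ TS G)
    (hμ : Invariant μ.1 q) (hF : ∀ z, μ.1 z ≠ 0 → z.1.1 ∈ F) :
    IsStationaryPair (StepIn G F) fun z w => μ.1 z * q z w :=
  isStationaryPair_mul_kernel μ hq.1 hq.2.1 hμ fun z w hz hw hzw =>
    ⟨hq.2.2 z w hzw, hF z hz, hF w hw⟩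

/-- The cost `∫ R(q‖p_F) dμ` of the pair measure `m = μ ⊗ q`. -/
def energy (δ : ℝ) (F : Finset (Sym2 V)) (m : VSet G → VSet G → ℝ) : ℝ :=
  pairEnergy (fun z => Real.log (outWeight δ F z)) m

lemma relEntInt_pS_eq_energy (hδ : 0 < δ) {μ : ProbMeas (VSet G)} {q : VSet G → VSet G → ℝ}
    (hq : q ∈ TS G) (hμ : Invariant μ.1 q) (hF : ∀ z, μ.1 z ≠ 0 → z.1.1 ∈ F) :
    relEntInt μ.1 q (pS G δ F) = (energy δ F fun z w => μ.1 z * q z w : ℝ) := by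
  refine relEntInt_eq_pairEnergy hq.2.1 (fun z w hp => ?_) fun z w hzw => ?_
  · exact not_imp_comm.1 (hq.2.2 z w) (zp_ne_zm_of_pS_eq_zero hδ hp)
  · exact pS_of_stepIn hδ ((isStationaryPair_of_mem_TS hq hμ hF).rel z w hzw)

variable {m : VSet G → VSet G → ℝ}

lemma IsStationaryPair.edge_mem (hm : IsStationaryPair (StepIn G F) m) {z : VSet G}
    (hz : marginal m z ≠ 0) : z.1.1 ∈ F := by
  obtain ⟨w, -, -, -, hz⟩ := hm.exists_pred hz
  exact hz

lemma IsStationaryPair.exists_kernel (hm : IsStationaryPair (StepIn G F) m) :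
    ∃ q ∈ TS G, Invariant (marginal m) q ∧
      ∀ δ, 0 < δ → relEntInt (marginal m) q (pS G δ F) = (energy δ F m : ℝ) := by
  have hmul := marginal_mul_condKernel reverse hm.nonneg
  have hq : condKernel reverse m ∈ TS G := by
    refine ⟨condKernel_nonneg _ hm.nonneg, sum_condKernel _ m, fun z w hzw => ?_⟩
    rcases eq_next_or_ne_zero_of_condKernel_ne_zero hzw with rfl | hzw
    exacts [(zm_reverse z).symm, (hm.rel z w hzw).1]
  have hinv : Invariant (marginal m) (condKernel reverse m) := by
    intro w
    simp only [hmul, hm.balance]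
  refine ⟨_, hq, hinv, fun δ hδ => ?_⟩
  have hcost := relEntInt_pS_eq_energy (μ := hm.toProbMeas) hδ hq hinv fun _ => hm.edge_mem
  simpa only [IsStationaryPair.toProbMeas, hmul] using hcost

lemma log_outWeight_anti {δ₁ δ₂ : ℝ} (hm : IsStationaryPair (StepIn G F) m) (hδ₁ : 0 < δ₁)
    (h : δ₁ ≤ δ₂) (z : VSet G) (hz : marginal m z ≠ 0) :
    Real.log (outWeight δ₂ F z) ≤ Real.log (outWeight δ₁ F z) :=
  Real.log_le_log (zero_lt_one.trans_le (one_le_outWeight (hδ₁.trans_le h) (hm.edge_mem hz)))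
    (outWeight_anti hδ₁ h F z)

lemma antitoneOn_energy (hm : IsStationaryPair (StepIn G F) m) :
    AntitoneOn (fun δ => energy δ F m) (Set.Ioi 0) := fun _ hδ₁ _ _ h =>
  pairEnergy_mono hm.nonneg (log_outWeight_anti hm hδ₁ h)

lemma strictAntiOn_energy (hm : IsStationaryPair (StepIn G F) m) {z : VSet G}
    (hz : marginal m z ≠ 0) (hdeg : outDegIn G F z ≠ outDeg G z) :
    StrictAntiOn (fun δ => energy δ F m) (Set.Ioi 0) := fun _ hδ₁ _ hδ₂ h =>
  pairEnergy_strictMono hm.nonneg (log_outWeight_anti hm hδ₁ h.le) hz <| Real.log_lt_log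
    (zero_lt_one.trans_le (one_le_outWeight hδ₂ (hm.edge_mem hz)))
    (outWeight_strictAnti hδ₁ h hdeg)

lemma tendsto_energy_atTop (hm : IsStationaryPair (StepIn G F) m) {z : VSet G}
    (hz : marginal m z ≠ 0) (hdeg : outDegIn G F z ≠ outDeg G z) :
    Tendsto (fun δ => energy δ F m) (𝓝[>] 0) atTop := by
  have hcost : Tendsto (fun δ => pairEnergy 0 m + marginal m z * -Real.log δ) (𝓝[>] 0) atTop :=
    tendsto_atTop_add_const_left _ _ ((tendsto_neg_atBot_atTop.comp
      Real.tendsto_log_nhdsGT_zero).const_mul_atTop ((marginal_nonneg hm.nonneg z).lt_of_ne' hz))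
  refine tendsto_atTop_mono' _ ?_ hcost
  filter_upwards [self_mem_nhdsWithin] with δ (hδ : 0 < δ)
  rw [← pairEnergy_single]
  refine pairEnergy_mono hm.nonneg fun w hw => ?_
  rcases eq_or_ne w z with rfl | hwz
  · rw [Pi.single_eq_same, ← Real.log_inv]
    exact Real.log_le_log (inv_pos.2 hδ) (inv_le_outWeight hδ hdeg)
  · rw [Pi.single_eq_of_ne hwz]
    exact Real.log_nonneg (one_le_outWeight hδ (hm.edge_mem hw))

lemma energy_eq_of_outDegIn_eq (hm : ∀ z w, 0 ≤ m z w)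
    (hdeg : ∀ z, marginal m z ≠ 0 → outDegIn G F z = outDeg G z) (δ₁ δ₂ : ℝ) :
    energy δ₁ F m = energy δ₂ F m := by
  have hle (δ₁ δ₂ : ℝ) : energy δ₁ F m ≤ energy δ₂ F m := pairEnergy_mono hm fun z hz => by
    rw [outWeight_of_outDegIn_eq (hdeg z hz), outWeight_of_outDegIn_eq (hdeg z hz)]
  exact (hle δ₁ δ₂).antisymm (hle δ₂ δ₁)

variable (G) in
/-- `supp μ ⊆ (F ∖ ∂F) × {-1, 1}`. -/
def SuppInterior (F : Finset (Sym2 V)) (μ : VSet G → ℝ) : Prop :=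
  ∀ z, μ z ≠ 0 → z.1.1 ∈ F ∧ z.1.1 ∉ bdry G F

lemma SuppInterior.outDegIn_eq {μ : VSet G → ℝ} (hμ : SuppInterior G F μ) {z : VSet G}
    (hz : μ z ≠ 0) : outDegIn G F z = outDeg G z := by
  refine outDegIn_eq_outDeg_iff.2 fun w hstep => ?_
  obtain ⟨hzF, hbdry⟩ := hμ z hz
  contrapose! hbdry
  exact Finset.mem_filter.2 ⟨hzF, w.1.1, Finset.mem_sdiff.2 ⟨w.1.2, hbdry⟩, zp G z, zp_mem z,
    hstep ▸ zm_mem w⟩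

/- An outside edge at the tail of `z` is an outgoing edge of any predecessor of `z`. -/
lemma IsStationaryPair.suppInterior (hm : IsStationaryPair (StepIn G F) m)
    (hdeg : ∀ z, marginal m z ≠ 0 → outDegIn G F z = outDeg G z) :
    SuppInterior G F (marginal m) := by
  have hhead {z : VSet G} (hz : marginal m z ≠ 0) {e : Sym2 V} (he : e ∈ G.edgeFinset)
      (hze : zp G z ∈ e) : e ∈ F := by
    obtain ⟨w, rfl, hw⟩ := exists_zm_eq he hze
    exact outDegIn_eq_outDeg_iff.1 (hdeg z hz) w hw.symm
  refine fun z hz => ⟨hm.edge_mem hz, fun hbdry => ?_⟩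
  obtain ⟨e, he, v, hvz, hve⟩ := (Finset.mem_filter.1 hbdry).2
  obtain ⟨heG, heF⟩ := Finset.mem_sdiff.1 he
  rw [edge_eq, Sym2.mem_iff] at hvz
  rcases hvz with rfl | rfl
  · obtain ⟨a, ha, hstep, -⟩ := hm.exists_pred hz
    exact heF (hhead ha heG (hstep ▸ hve))
  · exact heF (hhead hz heG hve)

end Energy

section Exhaustion

lemma exists_seq_insert {α : Type*} [DecidableEq α] {U : Finset α} {P : Finset α → Prop}
    {Q : Finset α → α → Prop} {a : α} (ha : a ∈ U) (hP : P {a})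
    (hstep : ∀ F ⊂ U, F.Nonempty → P F → ∃ b ∈ U, b ∉ F ∧ Q F b ∧ P (insert b F)) :
    ∃ f : ℕ → Finset α, f 0 = {a} ∧ ∀ n < U.card, f n ⊆ U ∧ (f n).card = n + 1 ∧ P (f n) ∧
      (n + 1 < U.card → ∃ b ∉ f n, Q (f n) b ∧ f (n + 1) = insert b (f n)) := by
  have : Nonempty α := ⟨a⟩
  choose! next hmem hnotMem hQ hPnext using hstep
  let f : ℕ → Finset α := Nat.rec {a} fun _ F => insert (next F) F
  have hssubset {n : ℕ} (hn : n + 1 < U.card) (hsub : f n ⊆ U) (hcard : (f n).card = n + 1) :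
      f n ⊂ U ∧ (f n).Nonempty :=
    ⟨hsub.ssubset_of_ne fun h => hn.ne (h ▸ hcard).symm, Finset.card_pos.1 (hcard ▸ n.succ_pos)⟩
  have hf (n : ℕ) : n < U.card → f n ⊆ U ∧ (f n).card = n + 1 ∧ P (f n) := by
    induction n with
    | zero => exact fun _ => ⟨Finset.singleton_subset_iff.2 ha, Finset.card_singleton a, hP⟩
    | succ n ih =>
      intro hn
      obtain ⟨hsub, hcard, hPn⟩ := ih (n.lt_succ_self.trans hn)
      obtain ⟨hlt, hne⟩ := hssubset hn hsub hcard
      refine ⟨Finset.insert_subset (hmem _ hlt hne hPn) hsub, ?_, hPnext _ hlt hne hPn⟩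
      rw [Finset.card_insert_of_notMem (hnotMem _ hlt hne hPn), hcard]
  refine ⟨f, rfl, fun n hn => ?_⟩
  obtain ⟨hsub, hcard, hPn⟩ := hf n hn
  refine ⟨hsub, hcard, hPn, fun hn' => ?_⟩
  obtain ⟨hlt, hne⟩ := hssubset hn' hsub hcard
  exact ⟨next (f n), hnotMem _ hlt hne hPn, hQ _ hlt hne hPn, rfl⟩

variable {V : Type} [Fintype V] {G : SimpleGraph V} [DecidableRel G.Adj] {v₁ : V}
  {E F : Finset (Sym2 V)}

lemma nonempty_of_mem_scrS (hE : E ∈ scrS G v₁) : E.Nonempty := by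
  obtain ⟨e, he, -⟩ := hE.2.1
  exact ⟨e, he⟩

lemma exists_edgeAdj_of_ssubset (hE : E ∈ scrS G v₁) (hF : F.Nonempty) (hFE : F ⊂ E) :
    ∃ e ∈ E, e ∉ F ∧ ∃ e' ∈ F, edgeAdj e e' := by
  obtain ⟨e₀, he₀E, he₀F⟩ := Finset.exists_of_ssubset hFE
  obtain ⟨e₁, he₁F⟩ := hF
  by_contra! hclosed
  have hverts {x y : V} (hx : memVerts F x)
      (hxy : (SimpleGraph.fromEdgeSet (↑E : Set (Sym2 V))).Reachable x y) : memVerts F y := by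
    rw [SimpleGraph.reachable_iff_reflTransGen] at hxy
    induction hxy with
    | refl => exact hx
    | @tail y z _ hyz ih =>
      obtain ⟨e', he', hy⟩ := ih
      have hyzE : s(y, z) ∈ E := ((SimpleGraph.fromEdgeSet_adj _).1 hyz).1
      by_cases hyzF : s(y, z) ∈ F
      · exact ⟨_, hyzF, Sym2.mem_mk_right y z⟩
      · exact (hclosed _ hyzE hyzF e' he' ⟨y, Sym2.mem_mk_left y z, hy⟩).elim
  obtain ⟨e', he', hv⟩ := hverts ⟨e₁, he₁F, e₁.out_fst_mem⟩ <|
    hE.2.2 _ _ ⟨e₁, hFE.subset he₁F, e₁.out_fst_mem⟩ ⟨e₀, he₀E, e₀.out_fst_mem⟩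
  exact hclosed e₀ he₀E he₀F e' he' ⟨_, e₀.out_fst_mem, hv⟩

lemma edgeFinset_mem_scrS (hG : G.Connected) (hE : E ∈ scrS G v₁) : G.edgeFinset ∈ scrS G v₁ := by
  obtain ⟨hEG, ⟨e, he, hv⟩, -⟩ := hE
  refine ⟨subset_rfl, ⟨e, hEG he, hv⟩, fun x y _ _ => ?_⟩
  rw [SimpleGraph.coe_edgeFinset, SimpleGraph.fromEdgeSet_edgeSet]
  exact hG.preconnected x y

variable [DecidableEq V]

/- Grow inside `E` until it is full, then inside `G`. -/
lemma exists_edgeAdj_insert_comparable (hG : G.Connected) (hE : E ∈ scrS G v₁)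
    (hFG : F ⊂ G.edgeFinset) (hF : F.Nonempty) (hcomp : F ⊆ E ∨ E ⊆ F) :
    ∃ e ∈ G.edgeFinset, e ∉ F ∧ (∃ e' ∈ F, edgeAdj e e') ∧
      (insert e F ⊆ E ∨ E ⊆ insert e F) := by
  by_cases hEF : E ⊆ F
  · obtain ⟨e, he, heF, hadj⟩ := exists_edgeAdj_of_ssubset (edgeFinset_mem_scrS hG hE) hF hFG
    exact ⟨e, he, heF, hadj, .inr (hEF.trans (Finset.subset_insert e F))⟩
  · have hFE : F ⊆ E := hcomp.resolve_right hEF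
    obtain ⟨e, he, heF, hadj⟩ := exists_edgeAdj_of_ssubset hE hF (hFE.ssubset_of_not_subset hEF)
    exact ⟨e, hE.1 he, heF, hadj, .inl (Finset.insert_subset he hFE)⟩

lemma exists_mem_seqE (hG : G.Connected) (hE : E ∈ scrS G v₁) :
    ∃ Es ∈ seqE G v₁, ∃ k, Es k = E := by
  obtain ⟨e, heE, hv⟩ := hE.2.1
  obtain ⟨f, hf0, hf⟩ := exists_seq_insert (P := fun F => F ⊆ E ∨ E ⊆ F)
    (Q := fun F e => ∃ e' ∈ F, edgeAdj e e') (hE.1 heE) (.inl (Finset.singleton_subset_iff.2 heE))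
    fun F => exists_edgeAdj_insert_comparable hG hE
  have hsucc {k l : Fin G.edgeFinset.card} (hkl : (k : ℕ) + 1 = l) :
      ∃ e ∉ f k, (∃ e' ∈ f k, edgeAdj e e') ∧ f l = insert e (f k) :=
    hkl ▸ (hf k k.2).2.2.2 (hkl ▸ l.2)
  refine ⟨fun k => f k, ⟨fun k => (hf k k.2).1, fun k => (hf k k.2).2.1, fun k l hkl => ?_,
    fun k hk => ?_, fun k l hkl e' he' => ?_⟩, ?_⟩
  · obtain ⟨e', he', -, hl⟩ := hsucc hkl
    exact (Finset.ssubset_insert he').trans_eq hl.symm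
  · simpa [hk, hf0] using hv
  · obtain ⟨e'', -, hadj, hl⟩ := hsucc hkl
    obtain ⟨hmem, hnotMem⟩ := Finset.mem_sdiff.1 he'
    rwa [(Finset.mem_insert.1 (hl.subset hmem)).resolve_right hnotMem]
  · have hpos : 0 < E.card := Finset.card_pos.2 (nonempty_of_mem_scrS hE)
    have hlt : E.card - 1 < G.edgeFinset.card :=
      (Nat.sub_one_lt hpos.ne').trans_le (Finset.card_le_card hE.1)
    obtain ⟨-, hcard, hcomp, -⟩ := hf _ hlt
    rw [Nat.sub_add_cancel hpos] at hcard
    refine ⟨⟨E.card - 1, hlt⟩, hcomp.elim (fun h => ?_) fun h => ?_⟩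
    · exact Finset.eq_of_subset_of_card_le h hcard.ge
    · exact (Finset.eq_of_subset_of_card_le h hcard.le).symm

end Exhaustion

section Minimizers

variable {V : Type} [Fintype V] [LinearOrder V] {G : SimpleGraph V} [DecidableRel G.Adj] {v₁ : V}
  {E : Finset (Sym2 V)} {δ : ℝ} {m : VSet G → VSet G → ℝ}

lemma exists_marginal_ne_zero_zp_eq (hE : E ∈ scrS G v₁) (hm : IsStationaryPair (StepIn G E) m)
    (hmin : IsMinOn (energy δ E) {m | IsStationaryPair (StepIn G E) m} m) {v : V}
    (hv : memVerts E v) : ∃ z, marginal m z ≠ 0 ∧ zp G z = v := by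
  obtain ⟨z₀, hz₀⟩ := hm.exists_marginal_ne_zero
  have hreach := hE.2.2 (zp G z₀) v ⟨_, hm.edge_mem hz₀, zp_mem z₀⟩ hv
  rw [SimpleGraph.reachable_iff_reflTransGen] at hreach
  induction hreach with
  | refl => exact ⟨z₀, hz₀, rfl⟩
  | @tail x y _ hxy ih =>
    have hxyE : s(x, y) ∈ E := ((SimpleGraph.fromEdgeSet_adj _).1 hxy).1
    obtain ⟨z, hz, hzx⟩ := ih ⟨_, hxyE, Sym2.mem_mk_left x y⟩
    obtain ⟨w, hwe, hwx⟩ := exists_zm_eq (hE.1 hxyE) (Sym2.mem_mk_left x y)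
    obtain ⟨n, hn, hnpos⟩ := exists_isStationaryPair_pos (G := G) (F := E) (a := z) (b := w)
      ⟨hzx.trans hwx.symm, hm.edge_mem hz, hwe ▸ hxyE⟩
    refine ⟨w, hm.marginal_right_ne_zero (hm.ne_zero_of_isMinOn hmin hn hz hnpos), ?_⟩
    rwa [edge_eq, hwx, Sym2.congr_right] at hwe

lemma exists_outDegIn_ne_outDeg (hG : G.Connected) (hE : E ∈ scrS G v₁) (hne : E ≠ G.edgeFinset)
    (hm : IsStationaryPair (StepIn G E) m)
    (hmin : IsMinOn (energy δ E) {m | IsStationaryPair (StepIn G E) m} m) :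
    ∃ z, marginal m z ≠ 0 ∧ outDegIn G E z ≠ outDeg G z := by
  obtain ⟨e, heG, heE, e', he', v, hve, hve'⟩ := exists_edgeAdj_of_ssubset
    (edgeFinset_mem_scrS hG hE) (nonempty_of_mem_scrS hE) (hE.1.ssubset_of_ne hne)
  obtain ⟨z, hz, rfl⟩ := exists_marginal_ne_zero_zp_eq hE hm hmin ⟨e', he', hve'⟩
  obtain ⟨w, rfl, hw⟩ := exists_zm_eq heG hve
  exact ⟨z, hz, fun hdeg => heE (outDegIn_eq_outDeg_iff.1 hdeg w hw.symm)⟩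

end Minimizers

section DecayRate

variable {V : Type} [Fintype V] [LinearOrder V] {G : SimpleGraph V} [DecidableRel G.Adj] {v₁ : V}
  {S0 : Set (Finset (Sym2 V))} {E F : Finset (Sym2 V)} {δ : ℝ} {m : VSet G → VSet G → ℝ}

variable (G v₁ S0) in
/-- `a(δ) = inf_{𝒞(𝒮₀)} Λ_{δ,𝒮₀}`. -/
def decayRate (δ : ℝ) : EReal := sInf (Lam G v₁ δ S0 '' CC G S0)

lemma decayRate_le_energy (hG : G.Connected) (hS0 : S0 ⊆ scrS G v₁) (hδ : 0 < δ) (hE : E ∈ S0)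
    (hm : IsStationaryPair (StepIn G E) m) : decayRate G v₁ S0 δ ≤ energy δ E m := by
  obtain ⟨Es, hEs, k, rfl⟩ := exists_mem_seqE hG (hS0 hE)
  have hstage (j) : ∃ n, IsStationaryPair (StepIn G (Es j)) n ∧ (j = k → n = m) := by
    rcases eq_or_ne j k with rfl | hj
    · exact ⟨m, hm, fun _ => rfl⟩
    · obtain ⟨n, hn⟩ := exists_isStationaryPair (hEs.1 j)
        (Finset.card_pos.1 (hEs.2.1 j ▸ Nat.succ_pos _))
      exact ⟨n, hn, fun h => (hj h).elim⟩
  choose n hn hnk using hstage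
  obtain rfl := hnk k rfl
  choose q hq hinv hcost using fun j => (hn j).exists_kernel
  refine sInf_le_of_le ⟨(hn k).toProbMeas, ⟨Es k, hE, fun _ => (hn k).edge_mem⟩, rfl⟩
    (sInf_le ⟨fun j => (hn j).toProbMeas, fun j => if j = k then 1 else 0, Es, q, hEs, fun j => ?_,
      fun j hj => if_neg ?_, by simp, fun j _ => (hn j).edge_mem, by simp, hq, hinv, ?_⟩)
  · positivity
  · rintro rfl
    exact hj hE
  · rw [Finset.sum_eq_single k (fun j _ hj => by simp [hj]) (by simp)]
    simp only [if_true, EReal.coe_one, one_mul]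
    exact (hcost k δ hδ).symm

lemma le_decayRate (hδ : 0 < δ) {M : ℝ}
    (hM : ∀ E ∈ S0, ∀ m, IsStationaryPair (StepIn G E) m → M ≤ energy δ E m) :
    M ≤ decayRate G v₁ S0 δ := by
  refine le_sInf ?_
  rintro _ ⟨μ, -, rfl⟩
  refine le_sInf ?_
  rintro _ ⟨μs, r, Es, qs, -, hr, hr0, hr1, hsupp, -, hq, hinv, rfl⟩
  calc (M : EReal) = ∑ k, (r k : EReal) * M := by
        simp only [← EReal.coe_mul, ← ereal_coe_sum, ← Finset.sum_mul, hr1, one_mul]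
    _ ≤ ∑ k, (r k : EReal) * relEntInt (μs k).1 (qs k) (pS G δ (Es k)) :=
        Finset.sum_le_sum fun k _ => ?_
  by_cases hk : Es k ∈ S0
  · rw [relEntInt_pS_eq_energy hδ (hq k) (hinv k) (hsupp k)]
    exact mul_le_mul_of_nonneg_left (EReal.coe_le_coe_iff.2 (hM _ hk _
      (isStationaryPair_of_mem_TS (hq k) (hinv k) (hsupp k)))) (EReal.coe_nonneg.2 (hr k))
  · simp only [hr0 k hk, EReal.coe_zero, zero_mul, le_refl]

lemma exists_forall_energy_le (hne : S0.Nonempty) (hS0 : S0 ⊆ scrS G v₁) (δ : ℝ) :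
    ∃ E ∈ S0, ∃ m, IsStationaryPair (StepIn G E) m ∧
      ∀ F ∈ S0, ∀ n, IsStationaryPair (StepIn G F) n → energy δ E m ≤ energy δ F n := by
  have hmin (F : Finset (Sym2 V)) : ∃ m, F ∈ S0 → IsStationaryPair (StepIn G F) m ∧
      IsMinOn (energy δ F) {m | IsStationaryPair (StepIn G F) m} m := by
    by_cases hF : F ∈ S0
    · obtain ⟨m, hm⟩ := exists_isMinOn_pairEnergy (fun z => Real.log (outWeight δ F z))
        (exists_isStationaryPair (hS0 hF).1 (nonempty_of_mem_scrS (hS0 hF)))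
      exact ⟨m, fun _ => hm⟩
    · exact ⟨0, fun h => (hF h).elim⟩
  choose m hm using hmin
  obtain ⟨E, hE, hle⟩ := Set.exists_min_image S0 (fun F => energy δ F (m F)) S0.toFinite hne
  exact ⟨E, hE, m E, (hm E hE).1, fun F hF n hn => (hle F hF).trans ((hm F hF).2 hn)⟩

theorem strictAntiOn_decayRate (hG : G.Connected) (hne : S0.Nonempty) (hS0 : S0 ⊆ scrS G v₁)
    (hfull : G.edgeFinset ∉ S0) : StrictAntiOn (decayRate G v₁ S0) (Set.Ioi 0) := by
  intro δ₁ hδ₁ δ₂ hδ₂ h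
  obtain ⟨E, hE, m, hm, hmin⟩ := exists_forall_energy_le hne hS0 δ₁
  obtain ⟨z, hz, hdeg⟩ := exists_outDegIn_ne_outDeg hG (hS0 hE) (fun h => hfull (h ▸ hE)) hm
    fun n hn => hmin E hE n hn
  calc decayRate G v₁ S0 δ₂ ≤ energy δ₂ E m := decayRate_le_energy hG hS0 hδ₂ hE hm
    _ < energy δ₁ E m := EReal.coe_lt_coe_iff.2 (strictAntiOn_energy hm hz hdeg hδ₁ hδ₂ h)
    _ ≤ decayRate G v₁ S0 δ₁ := le_decayRate hδ₁ hmin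

end DecayRate

section Limit

lemma eventually_nhdsGT_forall_lt_of_isCompact {X : Type*} [TopologicalSpace X] {K : Set X}
    (hK : IsCompact K) {f : ℝ → X → ℝ} {M : ℝ} (hf : ∀ δ, Continuous (f δ))
    (hanti : ∀ x ∈ K, AntitoneOn (fun δ => f δ x) (Set.Ioi 0))
    (hM : ∀ x ∈ K, ∃ δ > 0, M < f δ x) : ∀ᶠ δ in 𝓝[>] 0, ∀ x ∈ K, M < f δ x := by
  have hlocal : ∀ᶠ δ in 𝓝[>] (0 : ℝ), ∀ x ∈ K, x ∈ K → M < f δ x := by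
    refine hK.induction_on (p := fun s => ∀ᶠ δ in 𝓝[>] (0 : ℝ), ∀ x ∈ s, x ∈ K → M < f δ x)
      (by simp) (fun s t hst ht => ht.mono fun δ h x hx => h x (hst hx)) (fun s t hs ht => ?_)
      fun x hx => ?_
    · filter_upwards [hs, ht] with δ hs ht x hx
      exact hx.elim (hs x) (ht x)
    · obtain ⟨δ₀, hδ₀, hlt⟩ := hM x hx
      refine ⟨_, mem_nhdsWithin_of_mem_nhds (((hf δ₀).isOpen_preimage _ isOpen_Ioi).mem_nhds hlt),
        ?_⟩
      filter_upwards [Ioc_mem_nhdsGT hδ₀] with δ hδ y (hy : M < f δ₀ y) hyK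
      exact hy.trans_le (hanti y hyK hδ.1 hδ₀ hδ.2)
  exact hlocal.mono fun δ h x hx => h x hx hx

variable {V : Type} [Fintype V] [LinearOrder V] {G : SimpleGraph V} [DecidableRel G.Adj] {v₁ : V}
  {S0 : Set (Finset (Sym2 V))} {F : Finset (Sym2 V)} {δ : ℝ} {m : VSet G → VSet G → ℝ}

variable (G S0) in
/-- The infimum of `Λ₁` over the measures supported in `F ∖ ∂F` for some `F ∈ 𝒮₀`. -/
def interiorRate : EReal :=
  sInf {c | ∃ (μ : ProbMeas (VSet G)) (F : Finset (Sym2 V)),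
    F ∈ S0 ∧ SuppInterior G F μ.1 ∧ c = Lam1 G μ}

lemma decayRate_le_interiorRate (hG : G.Connected) (hS0 : S0 ⊆ scrS G v₁) (hδ : 0 < δ) :
    decayRate G v₁ S0 δ ≤ interiorRate G S0 := by
  refine le_sInf ?_
  rintro _ ⟨μ, F, hF, hμ, rfl⟩
  refine le_sInf ?_
  rintro _ ⟨q, hq, hinv, rfl⟩
  have hsupp (z : VSet G) (hz : μ.1 z ≠ 0) : z.1.1 ∈ F := (hμ z hz).1
  have hm := isStationaryPair_of_mem_TS hq hinv hsupp
  rw [← pS_one F, relEntInt_pS_eq_energy one_pos hq hinv hsupp,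
    energy_eq_of_outDegIn_eq hm.nonneg (fun z hz => hμ.outDegIn_eq ?_) 1 δ]
  · exact decayRate_le_energy hG hS0 hδ hF hm
  · rwa [marginal_mul_kernel hq.2.1] at hz

lemma interiorRate_le_energy (hF : F ∈ S0) (hm : IsStationaryPair (StepIn G F) m)
    (hint : SuppInterior G F (marginal m)) : interiorRate G S0 ≤ energy 1 F m := by
  obtain ⟨q, hq, hinv, hcost⟩ := hm.exists_kernel
  exact sInf_le_of_le ⟨hm.toProbMeas, F, hF, hint, rfl⟩
    (sInf_le ⟨q, hq, hinv, by rw [← pS_one F]; exact (hcost 1 one_pos).symm⟩)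

lemma eventually_forall_lt_energy {M : ℝ} (hM : M < interiorRate G S0) (hF : F ∈ S0) :
    ∀ᶠ δ in 𝓝[>] 0, ∀ m, IsStationaryPair (StepIn G F) m → M < energy δ F m := by
  refine eventually_nhdsGT_forall_lt_of_isCompact (isCompact_setOf_isStationaryPair (StepIn G F))
    (fun δ => continuous_pairEnergy _) (fun m hm => antitoneOn_energy hm) fun m hm => ?_
  by_cases hdeg : ∀ z, marginal m z ≠ 0 → outDegIn G F z = outDeg G z
  · exact ⟨1, one_pos, EReal.coe_lt_coe_iff.1
      (hM.trans_le (interiorRate_le_energy hF hm (hm.suppInterior hdeg)))⟩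
  · push Not at hdeg
    obtain ⟨z, hz, hdeg⟩ := hdeg
    obtain ⟨δ, hlt, hδ⟩ := (((tendsto_energy_atTop hm hz hdeg).eventually_gt_atTop M).and
      self_mem_nhdsWithin).exists
    exact ⟨δ, hδ, hlt⟩

theorem tendsto_decayRate (hG : G.Connected) (hS0 : S0 ⊆ scrS G v₁) :
    Tendsto (decayRate G v₁ S0) (𝓝[>] 0) (𝓝 (interiorRate G S0)) := by
  refine tendsto_order.2 ⟨fun a ha => ?_, fun a ha => ?_⟩
  · obtain ⟨M, haM, hM⟩ := EReal.lt_iff_exists_real_btwn.1 ha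
    filter_upwards [self_mem_nhdsWithin, (eventually_all_finite S0.toFinite).2 fun F hF =>
      eventually_forall_lt_energy hM hF] with δ hδ hlt
    exact haM.trans_le (le_decayRate hδ fun E hE m hm => (hlt E hE m hm).le)
  · filter_upwards [self_mem_nhdsWithin] with δ hδ
    exact (decayRate_le_interiorRate hG hS0 hδ).trans_lt ha

lemma interiorRate_lt_top_iff : interiorRate G S0 < ⊤ ↔ ∃ F ∈ S0, ∃ (μ : ProbMeas (VSet G))
    (q : VSet G → VSet G → ℝ), q ∈ TS G ∧ Invariant μ.1 q ∧ SuppInterior G F μ.1 := by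
  constructor
  · intro h
    obtain ⟨_, ⟨μ, F, hF, hμ, rfl⟩, hlt⟩ := sInf_lt_iff.1 h
    obtain ⟨_, ⟨q, hq, hinv, -⟩, -⟩ := sInf_lt_iff.1 hlt
    exact ⟨F, hF, μ, q, hq, hinv, hμ⟩
  · rintro ⟨F, hF, μ, q, hq, hinv, hμ⟩
    have hm := isStationaryPair_of_mem_TS hq hinv fun z hz => (hμ z hz).1
    refine (interiorRate_le_energy hF hm ?_).trans_lt (EReal.coe_lt_top _)
    rwa [marginal_mul_kernel hq.2.1]

end Limit

lemma edgeFinset_notMem_of_decreasingIn {V : Type} [Fintype V] {G : SimpleGraph V}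
    [DecidableRel G.Adj] (hG : G.Connected) {v₁ : V} {S0 : Set (Finset (Sym2 V))}
    (hsub : S0 ⊆ scrS G v₁) (hdec : DecreasingIn G v₁ S0) (hne : S0 ≠ scrS G v₁) :
    G.edgeFinset ∉ S0 := fun hfull =>
  hne (hsub.antisymm fun E hE => hdec E _ hE (edgeFinset_mem_scrS hG hE) hE.1 hfull)

theorem orrw_alpha_monotone_limit_general {V : Type} [Fintype V] [LinearOrder V]
    (G : SimpleGraph V) [DecidableRel G.Adj] (hG : G.Connected) (v₁ : V)
    (S0 : Set (Finset (Sym2 V))) (hS0ne : S0.Nonempty) (hS0sub : S0 ⊆ scrS G v₁)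
    (hfull : G.edgeFinset ∉ S0) :
    StrictAntiOn (decayRate G v₁ S0) (Set.Ioi 0) ∧
    ((∃ F ∈ S0, ∃ (μ : ProbMeas (VSet G)) (q : VSet G → VSet G → ℝ),
        q ∈ TS G ∧ Invariant μ.1 q ∧ SuppInterior G F μ.1) →
      Tendsto (decayRate G v₁ S0) (𝓝[>] 0) (𝓝 (interiorRate G S0)) ∧ interiorRate G S0 < ⊤) ∧
    ((¬ ∃ F ∈ S0, ∃ (μ : ProbMeas (VSet G)) (q : VSet G → VSet G → ℝ),
        q ∈ TS G ∧ Invariant μ.1 q ∧ SuppInterior G F μ.1) →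
      Tendsto (decayRate G v₁ S0) (𝓝[>] 0) (𝓝 ⊤)) := by
  have hlim := tendsto_decayRate hG hS0sub
  rw [← interiorRate_lt_top_iff]
  exact ⟨strictAntiOn_decayRate hG hS0ne hS0sub hfull, fun h => ⟨hlim, h⟩,
    fun h => not_lt_top_iff.1 h ▸ hlim⟩

/-- `δ' ↦ inf_{𝒞(𝒮₀)} Λ_{δ',𝒮₀}` is strictly decreasing on `(0,∞)`,
and its limit as `δ' → 0+` is finite (and given by a `Λ₁`-variational formula)
exactly when some invariant measure is supported away from a boundary. -/
theorem orrw_alpha_monotone_limit {V : Type} [Fintype V] [LinearOrder V]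
    (G : SimpleGraph V) [DecidableRel G.Adj] (hG : G.Connected)
    (hV : 3 ≤ Fintype.card V) (v₁ : V)
    (S0 : Set (Finset (Sym2 V))) (hS0ne : S0.Nonempty) (hS0sub : S0 ⊆ scrS G v₁)
    (hS0dec : DecreasingIn G v₁ S0) (hS0ne' : S0 ≠ scrS G v₁) :
    StrictAntiOn (fun d : ℝ => sInf (Lam G v₁ d S0 '' CC G S0)) (Set.Ioi 0) ∧
    ((∃ F ∈ S0, ∃ (μ : ProbMeas (VSet G)) (q : VSet G → VSet G → ℝ),
        q ∈ TS G ∧ Invariant μ.1 q ∧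
        ∀ z : VSet G, μ.1 z ≠ 0 → z.1.1 ∈ F ∧ z.1.1 ∉ bdry G F) →
      (Tendsto (fun d : ℝ => sInf (Lam G v₁ d S0 '' CC G S0))
          (nhdsWithin 0 (Set.Ioi 0))
          (nhds (sInf { c : EReal | ∃ (μ : ProbMeas (VSet G)) (F : Finset (Sym2 V)),
            F ∈ S0 ∧ (∀ z : VSet G, μ.1 z ≠ 0 → z.1.1 ∈ F ∧ z.1.1 ∉ bdry G F) ∧
            c = Lam1 G μ })) ∧
        sInf { c : EReal | ∃ (μ : ProbMeas (VSet G)) (F : Finset (Sym2 V)),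
          F ∈ S0 ∧ (∀ z : VSet G, μ.1 z ≠ 0 → z.1.1 ∈ F ∧ z.1.1 ∉ bdry G F) ∧
          c = Lam1 G μ } < ⊤)) ∧
    (¬ (∃ F ∈ S0, ∃ (μ : ProbMeas (VSet G)) (q : VSet G → VSet G → ℝ),
        q ∈ TS G ∧ Invariant μ.1 q ∧
        ∀ z : VSet G, μ.1 z ≠ 0 → z.1.1 ∈ F ∧ z.1.1 ∉ bdry G F) →
      Tendsto (fun d : ℝ => sInf (Lam G v₁ d S0 '' CC G S0))
        (nhdsWithin 0 (Set.Ioi 0)) (nhds (⊤ : EReal))) := by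
  exact orrw_alpha_monotone_limit_general G hG v₁ S0 hS0ne hS0sub
    (edgeFinset_notMem_of_decreasingIn hG hS0sub hS0dec hS0ne')

end ORRW
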